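/- Let n ≥ 1, let p ∈ ℝ with 1/2 ≤ p ≤ 1, and let p_1, …, p_n ∈ ℝ satisfy 1/2 ≤ p_i ≤ 1 for all i and ∏_{i=1}^n p_i ≤ p^n. Then (1/2^n) · ∏_{i=1}^n (1 + p_i) ≤ p^{λ n}, where λ = log₂(4/3). -/

import Mathlib

open scoped BigOperators

/-!
For `r ∈ [0, 1]` the function `x ↦ x ^ r` is concave, so on `[a, 1]` it lies above its chord. Every
affine function `x ↦ 1 - t + t * x` with `t ∈ [0, 1]` is the chord for a suitable `r`, whence
`1 - t + t * x ≤ x ^ r` on `[a, 1]`. Both sides of the resulting inequality are then multiplied over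
all factors, and the product of the powers is the power of the product. For `a = t = 1 / 2` the
exponent is `log₂ (4 / 3)`.
-/

/-- The exponent `r` for which `x ↦ x ^ r` and the affine function `x ↦ 1 - t + t * x` agree at `a`,
besides at `1`. -/
noncomputable def chordExponent (a t : ℝ) : ℝ :=
  Real.logb a (1 - t + t * a)

section ChordExponent

variable {a t x : ℝ}

lemma le_one_sub_add_mul (ha : a ≤ 1) (ht : t ≤ 1) : a ≤ 1 - t + t * a := by
  linear_combination mul_nonneg (sub_nonneg.2 ha) (sub_nonneg.2 ht)

lemma one_sub_add_mul_le_one (ha : a ≤ 1) (ht : 0 ≤ t) : 1 - t + t * a ≤ 1 := by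
  linear_combination mul_le_mul_of_nonneg_left ha ht

lemma rpow_chordExponent (ha : 0 < a) (ha1 : a < 1) (ht1 : t ≤ 1) :
    a ^ chordExponent a t = 1 - t + t * a :=
  Real.rpow_logb ha ha1.ne (ha.trans_le (le_one_sub_add_mul ha1.le ht1))

lemma chordExponent_nonneg (ha : 0 < a) (ha1 : a < 1) (ht : 0 ≤ t) (ht1 : t ≤ 1) :
    0 ≤ chordExponent a t :=
  Real.logb_nonneg_of_base_lt_one ha ha1 (ha.trans_le (le_one_sub_add_mul ha1.le ht1))
    (one_sub_add_mul_le_one ha1.le ht)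

lemma chordExponent_le_one (ha : 0 < a) (ha1 : a < 1) (ht1 : t ≤ 1) : chordExponent a t ≤ 1 := by
  have hchord : a ≤ 1 - t + t * a := le_one_sub_add_mul ha1.le ht1
  rwa [chordExponent, Real.logb_le_iff_le_rpow_of_base_lt_one ha ha1 (ha.trans_le hchord),
    Real.rpow_one]

lemma chordExponent_half_half : chordExponent (1 / 2) (1 / 2) = Real.logb 2 (4 / 3) := by
  rw [chordExponent, one_div, Real.logb_inv_base, ← Real.logb_inv]
  norm_num

lemma one_sub_add_mul_le_rpow_chordExponent (ha : 0 < a) (ha1 : a < 1) (ht : 0 ≤ t) (ht1 : t ≤ 1)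
    (hx : x ∈ Set.Icc a 1) : 1 - t + t * x ≤ x ^ chordExponent a t := by
  have hpow : ConcaveOn ℝ (Set.Ici 0) fun y : ℝ ↦ y ^ chordExponent a t :=
    Real.concaveOn_rpow (chordExponent_nonneg ha ha1 ht ht1) (chordExponent_le_one ha ha1 ht1)
  have hline : ConvexOn ℝ (Set.Ici 0) fun y : ℝ ↦ 1 - t + t * y :=
    (convexOn_const (1 - t) (convex_Ici 0)).add ((convexOn_id (convex_Ici 0)).smul ht)
  -- A concave function on an interval is at least the smaller of its two end values, here both `0`.
  have hdiff := (hpow.sub hline).min_le_of_mem_Icc ha.le (Set.mem_Ici.2 zero_le_one) hx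
  simpa [rpow_chordExponent ha ha1 ht1] using hdiff

end ChordExponent

lemma prod_one_sub_add_mul_le_rpow_chordExponent {ι : Type*} (s : Finset ι) {a t : ℝ}
    (ha : 0 < a) (ha1 : a < 1) (ht : 0 ≤ t) (ht1 : t ≤ 1) {q : ι → ℝ}
    (hq : ∀ i ∈ s, q i ∈ Set.Icc a 1) :
    ∏ i ∈ s, (1 - t + t * q i) ≤ (∏ i ∈ s, q i) ^ chordExponent a t := by
  have hq0 : ∀ i ∈ s, 0 ≤ q i := fun i hi ↦ ha.le.trans (hq i hi).1
  rw [← Real.finsetProd_rpow s q hq0]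
  exact Finset.prod_le_prod
    (fun i hi ↦ (hq0 i hi).trans (le_one_sub_add_mul (hq i hi).2 ht1))
    (fun i hi ↦ one_sub_add_mul_le_rpow_chordExponent ha ha1 ht ht1 (hq i hi))

theorem product_distribution_bound_general {ι : Type*} (s : Finset ι) {a t p : ℝ}
    (ha : 0 < a) (ha1 : a < 1) (ht : 0 ≤ t) (ht1 : t ≤ 1) (hp : 0 ≤ p) {q : ι → ℝ}
    (hq : ∀ i ∈ s, q i ∈ Set.Icc a 1) (hprod : ∏ i ∈ s, q i ≤ p ^ s.card) :
    ∏ i ∈ s, (1 - t + t * q i) ≤ p ^ (chordExponent a t * s.card) :=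
  calc ∏ i ∈ s, (1 - t + t * q i)
    _ ≤ (∏ i ∈ s, q i) ^ chordExponent a t :=
        prod_one_sub_add_mul_le_rpow_chordExponent s ha ha1 ht ht1 hq
    _ ≤ (p ^ s.card) ^ chordExponent a t :=
        Real.rpow_le_rpow (Finset.prod_nonneg fun i hi ↦ ha.le.trans (hq i hi).1) hprod
          (chordExponent_nonneg ha ha1 ht ht1)
    _ = p ^ (chordExponent a t * s.card) := by
        rw [mul_comm, Real.rpow_natCast_mul hp]

theorem product_distribution_bound
    (n : ℕ) (hn : 1 ≤ n) (p : ℝ) (hp : 1 / 2 ≤ p) (hp1 : p ≤ 1)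
    (q : Fin n → ℝ) (hq : ∀ i, 1 / 2 ≤ q i) (hq1 : ∀ i, q i ≤ 1)
    (hprod : ∏ i, q i ≤ p ^ n) :
    (1 / 2 ^ n) * ∏ i, (1 + q i) ≤ p ^ (Real.logb 2 (4 / 3) * n) := by
  have hmean (i : Fin n) : 1 / 2 * (1 + q i) = 1 - 1 / 2 + 1 / 2 * q i := by ring
  calc (1 / 2 ^ n) * ∏ i, (1 + q i)
    _ = ∏ i, (1 - 1 / 2 + 1 / 2 * q i) := by
        simp only [← hmean, Finset.prod_mul_distrib, Fin.prod_const, one_div_pow]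
    _ ≤ p ^ (chordExponent (1 / 2) (1 / 2) * (Finset.univ : Finset (Fin n)).card) :=
        product_distribution_bound_general Finset.univ (by norm_num) (by norm_num) (by norm_num)
          (by norm_num) (by linarith) (fun i _ ↦ ⟨hq i, hq1 i⟩) (by rwa [Finset.card_fin])
    _ = p ^ (Real.logb 2 (4 / 3) * n) := by rw [chordExponent_half_half, Finset.card_fin]
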